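/- arXiv:2311.06085 — 5 statements merged into one kernel-verified Lean document; each statement's English description precedes it below -/
import Mathlib

section
/- Let n ∈ ℕ and let Γ be a subgroup of the symmetric group on {1,…,n}, acting on vectors x ∈ {0,1}^n by (γ(x))_i = x_{γ⁻¹(i)}. Let L = (ℓ_1,…,ℓ_k) be a sequence of distinct indices in {1,…,n}; define Γ_1 = Γ, Γ_{i+1} = {γ ∈ Γ_i : γ(ℓ_i) = ℓ_i}, and O_i = {γ(ℓ_i) : γ ∈ Γ_i}. Then for every x ∈ {0,1}^n there exists γ ∈ Γ such that the vector y = γ(x) satisfies all SST cuts, i.e., y_f ≤ y_{ℓ_i} for every i ∈ {1,…,k} and every f ∈ O_i. (This is the key claim proved inside Theorem 3.1: every orbit of binary vectors meets the SST cone.) -/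
/-- The stabilizer chain: `sstChain Γ ℓ 0 = Γ` and
`sstChain Γ ℓ (i+1)` is the pointwise stabilizer of `ℓ i` inside `sstChain Γ ℓ i`. -/
def sstChain {α : Type*} (Γ : Set (Equiv.Perm α)) (ℓ : ℕ → α) : ℕ → Set (Equiv.Perm α)
  | 0 => Γ
  | i + 1 => {γ ∈ sstChain Γ ℓ i | γ (ℓ i) = ℓ i}

/-- The orbit `O_i` of the leader `ℓ i` under the `i`-th group of the stabilizer chain. -/
def sstOrbit {α : Type*} (Γ : Set (Equiv.Perm α)) (ℓ : ℕ → α) (i : ℕ) : Set α :=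
  (fun γ : Equiv.Perm α => γ (ℓ i)) '' sstChain Γ ℓ i

/-!
Choose `γ ∈ Γ` for which the vector of leader values `(x (γ⁻¹ ℓ₁), …, x (γ⁻¹ ℓₖ))` is
lexicographically maximal. If `f = δ ℓᵢ` with `δ ∈ Γᵢ`, then passing from `γ` to `δ⁻¹ γ` leaves the
first `i - 1` entries unchanged, since `δ` fixes `ℓ₁, …, ℓᵢ₋₁`, and turns the `i`-th entry into
`x (γ⁻¹ f)`; maximality therefore gives `x (γ⁻¹ f) ≤ x (γ⁻¹ ℓᵢ)`.
-/

section

variable {α R : Type*}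

theorem mem_sstChain_iff {Γ : Set (Equiv.Perm α)} {ℓ : ℕ → α} {i : ℕ} {γ : Equiv.Perm α} :
    γ ∈ sstChain Γ ℓ i ↔ γ ∈ Γ ∧ ∀ j < i, γ (ℓ j) = ℓ j := by
  induction i with
  | zero => simp [sstChain]
  | succ i ih => simp only [sstChain, Set.mem_ofPred_eq, ih, Nat.forall_lt_succ_right, and_assoc]

/-- The values of the permuted vector `γ(x)` at the first `k` leaders, as an element of the
lexicographic product, so that `≤` compares the leaders in their given order. -/
def leaderValues (x : α → R) (ℓ : ℕ → α) (k : ℕ) (γ : Equiv.Perm α) : Lex (Fin k → R) :=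
  toLex fun i => x (γ⁻¹ (ℓ i))

theorem finite_range_leaderValues {x : α → R} (hx : (Set.range x).Finite) (ℓ : ℕ → α) (k : ℕ) :
    (Set.range (leaderValues x ℓ k)).Finite := by
  refine (Set.Finite.pi' fun _ : Fin k => hx).subset ?_
  rintro _ ⟨γ, rfl⟩ i
  exact Set.mem_range_self (γ⁻¹ (ℓ i))

variable [LinearOrder R] {x : α → R}

theorem exists_isMaxOn_leaderValues (hx : (Set.range x).Finite) (ℓ : ℕ → α) (k : ℕ)
    {s : Set (Equiv.Perm α)} (hs : s.Nonempty) :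
    ∃ γ ∈ s, IsMaxOn (leaderValues x ℓ k) s γ := by
  have hfin : (leaderValues x ℓ k '' s).Finite :=
    (finite_range_leaderValues hx ℓ k).subset (Set.image_subset_range _ _)
  obtain ⟨_, ⟨γ, hγ, rfl⟩, hmax⟩ := Set.exists_max_image _ id hfin (hs.image _)
  exact ⟨γ, hγ, fun δ hδ => hmax _ (Set.mem_image_of_mem _ hδ)⟩

theorem apply_inv_le_of_isMaxOn_leaderValues {Γ : Subgroup (Equiv.Perm α)} {ℓ : ℕ → α} {k : ℕ}
    {γ : Equiv.Perm α} (hγ : γ ∈ Γ) (hmax : IsMaxOn (leaderValues x ℓ k) Γ γ)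
    {i : ℕ} (hi : i < k) {f : α} (hf : f ∈ sstOrbit (Γ : Set (Equiv.Perm α)) ℓ i) :
    x (γ⁻¹ f) ≤ x (γ⁻¹ (ℓ i)) := by
  obtain ⟨δ, hδ, rfl⟩ := hf
  obtain ⟨hδΓ, hfix⟩ := mem_sstChain_iff.mp hδ
  have hle : leaderValues x ℓ k (δ⁻¹ * γ) ≤ leaderValues x ℓ k γ :=
    hmax (Γ.mul_mem (Γ.inv_mem hδΓ) hγ)
  have hagree : ∀ j < (⟨i, hi⟩ : Fin k), x ((δ⁻¹ * γ)⁻¹ (ℓ j)) = x (γ⁻¹ (ℓ j)) := by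
    intro j hj
    rw [mul_inv_rev, inv_inv, Equiv.Perm.mul_apply, hfix j hj]
  simpa only [mul_inv_rev, inv_inv, Equiv.Perm.mul_apply] using Pi.apply_le_of_toLex hle hagree

theorem sst_orbit_meets_cone_general (k : ℕ) (Γ : Subgroup (Equiv.Perm α)) (ℓ : ℕ → α)
    (hx : (Set.range x).Finite) :
    ∃ γ ∈ Γ, ∀ i < k, ∀ f ∈ sstOrbit (Γ : Set (Equiv.Perm α)) ℓ i,
      x (γ⁻¹ f) ≤ x (γ⁻¹ (ℓ i)) := by
  obtain ⟨γ, hγ, hmax⟩ := exists_isMaxOn_leaderValues hx ℓ k (OneMemClass.coe_nonempty Γ)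
  exact ⟨γ, hγ, fun _ hi _ hf => apply_inv_le_of_isMaxOn_leaderValues hγ hmax hi hf⟩

end

/-- Every orbit of binary vectors under `Γ` contains a vector satisfying all SST cuts:
for any `x ∈ {0,1}^n` there is `γ ∈ Γ` such that `y = γ(x)`, given by `y i = x (γ⁻¹ i)`,
satisfies `y f ≤ y (ℓ i)` for every leader `ℓ i` and every `f` in its orbit `O_i`. -/
theorem sst_orbit_meets_cone (n k : ℕ) (Γ : Subgroup (Equiv.Perm (Fin n)))
    (ℓ : ℕ → Fin n) (hdist : ∀ i < k, ∀ j < k, ℓ i = ℓ j → i = j)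
    (x : Fin n → ℝ) (hx : ∀ i, x i = 0 ∨ x i = 1) :
    ∃ γ ∈ Γ, ∀ i < k, ∀ f ∈ sstOrbit (↑Γ : Set (Equiv.Perm (Fin n))) ℓ i,
      x (γ⁻¹ f) ≤ x (γ⁻¹ (ℓ i)) :=
  sst_orbit_meets_cone_general k Γ ℓ (Set.finite_range x)
end

section
/- Let k ∈ ℕ, let X, Y, Z be pairwise disjoint finite sets with |X| = |Y| = |Z| = k, and let 𝒯 = {T_1,…,T_m} ⊆ X × Y × Z be a finite set of triples; for T = (a,b,c) write elem(T) = {a,b,c}. Let B = 𝒯 ⊔ X ⊔ Y ⊔ Z and define w : 𝒯 × B → ℤ by w(T,β) = −2 if β = T, w(T,β) = 1 if β ∈ X ∪ Y ∪ Z and β ∈ elem(T), and w(T,β) = 0 otherwise. Call x : 𝒯 × B → {0,1} feasible if (i) Σ_{T ∈ 𝒯} x(T,β) ≤ 1 for every β ∈ B, and (ii) x(T_i,β) ≤ x(T_i,T_i) whenever β = T_j for some j > i or β ∈ X ∪ Y ∪ Z. Then there exists a feasible x with Σ_{T,β} w(T,β)·x(T,β) ≥ k if and only if there exists 𝒯'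 ⊆ 𝒯 such that every element of X ∪ Y ∪ Z belongs to exactly one triple of 𝒯' (a 3-dimensional matching). (This is the Claim proved inside Theorem 3.2, giving the reduction from 3D-matching.) -/
open Finset

/-- The column index set `B = 𝒯 ⊔ X ⊔ Y ⊔ Z`: a column is either a triple index
or an element of `X ∪ Y ∪ Z`. -/
abbrev ColIdx {α : Type*} [DecidableEq α] (m : ℕ) (X Y Z : Finset α) :=
  Fin m ⊕ {a : α // a ∈ X ∪ Y ∪ Z}

/-- The weight function `w` of the reduction: `w(T,β) = -2` if `β = T`,
`w(T,β) = 1` if `β ∈ X ∪ Y ∪ Z` belongs to the triple `T`, and `0` otherwise. -/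
def wgt {α : Type*} [DecidableEq α] (m : ℕ) (X Y Z : Finset α)
    (T : Fin m → α × α × α) : Fin m → ColIdx m X Y Z → ℤ
  | i, Sum.inl j => if j = i then -2 else 0
  | i, Sum.inr a => if a.1 = (T i).1 ∨ a.1 = (T i).2.1 ∨ a.1 = (T i).2.2 then 1 else 0

/-!
A 3-dimensional matching is an exact cover of a ground set of size `3 * k` by sets of size `3`. More
generally, let `e i` be sets of size `r + 1` in a ground set of size `(r + 1) * k`, with a leader of
weight `-r` in each row. If a row of a feasible matrix misses some element of `e i`, the cuts bound
its remaining `r` entries on `e i` by the leader, so its weight is at most `0`; a row that is `1` on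
all of `e i` has weight `1`, its leader being `1` too. Hence the weight is at most the number of
full rows. The column sums make the sets of full rows disjoint, so `k` full rows already cover the
ground set. Conversely, an exact cover has `k` members, and its indicator matrix has weight `k`.
-/

section ExactCover

variable {ι V : Type*}

/-- The members of the family `e` indexed by `M` form an exact cover of the ground set `V`. For
the family of triples of a 3D-matching instance, this says that `M` is a 3-dimensional matching. -/
def IsExactCover (e : ι → Finset V) (M : Finset ι) : Prop :=
  ∀ a, ∃! i, i ∈ M ∧ a ∈ e i

variable {e : ι → Finset V} {M : Finset ι} {d k : ℕ}

theorem isExactCover_iff_pairwiseDisjoint_and_biUnion_eq_univ [Fintype V] [DecidableEq V] :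
    IsExactCover e M ↔ (M : Set ι).PairwiseDisjoint e ∧ M.biUnion e = univ := by
  constructor
  · refine fun hM => ⟨fun i hi j hj hij => disjoint_left.2 fun a hai haj => hij ?_, ?_⟩
    · exact (hM a).unique ⟨hi, hai⟩ ⟨hj, haj⟩
    · exact eq_univ_of_forall fun a => mem_biUnion.2 (hM a).exists
  · rintro ⟨hdisj, hcover⟩ a
    obtain ⟨i, hi, hai⟩ := mem_biUnion.1 (hcover ▸ mem_univ a)
    exact ⟨i, ⟨hi, hai⟩, fun j ⟨hj, haj⟩ => hdisj.elim_finset hj hi a haj hai⟩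

theorem card_biUnion_of_pairwiseDisjoint_of_card_eq [DecidableEq V]
    (hdisj : (M : Set ι).PairwiseDisjoint e) (he : ∀ i ∈ M, #(e i) = d) :
    #(M.biUnion e) = d * #M := by
  rw [card_biUnion hdisj, sum_const_nat he, mul_comm]

theorem IsExactCover.card_eq [Fintype V] (hM : IsExactCover e M) (he : ∀ i ∈ M, #(e i) = d)
    (hd : d ≠ 0) (hV : Fintype.card V = d * k) : #M = k := by
  classical
  obtain ⟨hdisj, hcover⟩ := isExactCover_iff_pairwiseDisjoint_and_biUnion_eq_univ.1 hM
  have hcard := card_biUnion_of_pairwiseDisjoint_of_card_eq hdisj he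
  rw [hcover, card_univ, hV] at hcard
  exact (Nat.eq_of_mul_eq_mul_left (Nat.pos_of_ne_zero hd) hcard).symm

theorem isExactCover_of_pairwiseDisjoint_of_le_card [Fintype V]
    (hdisj : (M : Set ι).PairwiseDisjoint e) (he : ∀ i ∈ M, #(e i) = d)
    (hV : Fintype.card V = d * k) (hk : k ≤ #M) : IsExactCover e M := by
  classical
  refine isExactCover_iff_pairwiseDisjoint_and_biUnion_eq_univ.2 ⟨hdisj, ?_⟩
  refine eq_univ_of_card _ (le_antisymm (card_le_univ _) ?_)
  rw [card_biUnion_of_pairwiseDisjoint_of_card_eq hdisj he, hV]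
  exact Nat.mul_le_mul_left d hk

end ExactCover

section BinarySums

variable {ι V R : Type*} [CommRing R] [LinearOrder R] [IsStrictOrderedRing R]

theorem eq_of_sum_le_one_of_eq_one [Fintype ι] {f : ι → R} (hf : ∀ i, 0 ≤ f i)
    (hsum : ∑ i, f i ≤ 1) {i j : ι} (hi : f i = 1) (hj : f j = 1) : i = j := by
  classical
  by_contra hij
  have hpair : f i + f j ≤ ∑ l, f l := by
    rw [← sum_pair hij]
    exact sum_le_univ_sum_of_nonneg hf
  linarith

theorem sum_boole_le_one [Fintype ι] {p : ι → Prop} [DecidablePred p]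
    (hp : ∀ i j, p i → p j → i = j) : ∑ i, (if p i then (1 : R) else 0) ≤ 1 := by
  rw [sum_boole]
  exact_mod_cast card_le_one.2 fun i hi j hj => hp i j (mem_filter.1 hi).2 (mem_filter.1 hj).2

theorem sum_sub_mul_le_ite_forall_eq_one {s : Finset V} {r : ℕ} (hs : #s = r + 1) {y : V → R}
    (hy : ∀ a ∈ s, y a = 0 ∨ y a = 1) {c : R} (hyc : ∀ a ∈ s, y a ≤ c)
    {_ : Decidable (∀ a ∈ s, y a = 1)} :
    ∑ a ∈ s, y a - r * c ≤ if ∀ a ∈ s, y a = 1 then 1 else 0 := by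
  classical
  split_ifs with hone
  · obtain ⟨a, ha⟩ : s.Nonempty := card_pos.1 (by lia)
    have hc : 1 ≤ c := hone a ha ▸ hyc a ha
    have hrc : (r : R) ≤ r * c := le_mul_of_one_le_right r.cast_nonneg hc
    rw [sum_congr rfl hone, sum_const, hs, nsmul_one, Nat.cast_succ]
    linarith
  · push Not at hone
    obtain ⟨b, hb, hb_ne⟩ := hone
    rw [sub_nonpos]
    calc ∑ a ∈ s, y a = ∑ a ∈ s.erase b, y a :=
          (sum_erase s ((hy b hb).resolve_right hb_ne)).symm
      _ ≤ #(s.erase b) • c := sum_le_card_nsmul _ _ _ fun a ha => hyc a (mem_of_mem_erase ha)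
      _ = r * c := by rw [card_erase_of_mem hb, hs, Nat.add_sub_cancel, nsmul_eq_mul]

end BinarySums

section Reduction

variable {ι V R : Type*}

/-- Feasibility of a matrix with rows `ι` and columns `ι ⊕ V`: binary entries, column sums at most
one, and the SST cuts, where the leader of row `i` is the entry `(i, i)` and its followers are the
later columns of `ι` and all columns of `V`. -/
structure IsFeasible [Fintype ι] [LT ι] [AddCommMonoidWithOne R] [LE R]
    (x : ι → ι ⊕ V → R) : Prop where
  binary : ∀ i β, x i β = 0 ∨ x i β = 1
  sum_le_one : ∀ β, ∑ i, x i β ≤ 1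
  inl_le_leader : ∀ i j, i < j → x i (Sum.inl j) ≤ x i (Sum.inl i)
  inr_le_leader : ∀ i a, x i (Sum.inr a) ≤ x i (Sum.inl i)

theorem isFeasible_iff [Fintype ι] [LT ι] [AddCommMonoidWithOne R] [LE R]
    {x : ι → ι ⊕ V → R} :
    IsFeasible x ↔ (∀ i β, x i β = 0 ∨ x i β = 1) ∧ (∀ β, ∑ i, x i β ≤ 1) ∧
      (∀ i j, i < j → x i (Sum.inl j) ≤ x i (Sum.inl i)) ∧
      ∀ i a, x i (Sum.inr a) ≤ x i (Sum.inl i) :=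
  ⟨fun h => ⟨h.1, h.2, h.3, h.4⟩, fun ⟨h₁, h₂, h₃, h₄⟩ => ⟨h₁, h₂, h₃, h₄⟩⟩

/-- The rows in which the matrix `x` selects every element of the set `e i`; they are the only
rows of a feasible matrix with positive weight. -/
def fullRows [Fintype ι] [One R] [DecidableEq R] (e : ι → Finset V) (x : ι → ι ⊕ V → R) :
    Finset ι :=
  {i | ∀ a ∈ e i, x i (Sum.inr a) = 1}

theorem IsFeasible.pairwiseDisjoint_fullRows [Fintype ι] [LT ι] [CommRing R] [LinearOrder R]
    [IsStrictOrderedRing R] {e : ι → Finset V} {x : ι → ι ⊕ V → R} (hx : IsFeasible x) :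
    (fullRows e x : Set ι).PairwiseDisjoint e := by
  refine fun i hi j hj hij => disjoint_left.2 fun a hai haj => hij ?_
  have hnonneg (l : ι) : 0 ≤ x l (Sum.inr a) := by
    rcases hx.binary l (Sum.inr a) with h | h <;> simp [h]
  exact eq_of_sum_le_one_of_eq_one hnonneg (hx.sum_le_one (Sum.inr a))
    ((mem_filter.1 hi).2 a hai) ((mem_filter.1 hj).2 a haj)

variable [DecidableEq ι] [DecidableEq V]

/-- The weights of the reduction from exact cover by sets of size `r + 1`: each leader has weight
`-r` and the elements of `e i` have weight `1` in row `i`. The case `r = 2` is `wgt`. -/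
def coverWeight (r : ℕ) (e : ι → Finset V) (i : ι) : ι ⊕ V → ℤ
  | Sum.inl j => if j = i then -r else 0
  | Sum.inr a => if a ∈ e i then 1 else 0

/-- The matrix of a selection `M` of the family `e`: row `i` is the indicator of the leader and of
the elements of `e i` if `i ∈ M`, and zero otherwise. -/
def coverMatrix (R : Type*) [Zero R] [One R] (e : ι → Finset V) (M : Finset ι) (i : ι) :
    ι ⊕ V → R
  | Sum.inl j => if i ∈ M ∧ j = i then 1 else 0
  | Sum.inr a => if i ∈ M ∧ a ∈ e i then 1 else 0

variable [Fintype ι] {e : ι → Finset V} {M : Finset ι} {r k : ℕ}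

theorem sum_coverWeight_mul [Fintype V] [CommRing R] (i : ι) (y : ι ⊕ V → R) :
    ∑ β, (coverWeight r e i β : R) * y β = ∑ a ∈ e i, y (Sum.inr a) - r * y (Sum.inl i) := by
  simp [coverWeight, Fintype.sum_sum_type, ite_mul, neg_add_eq_sub]

theorem sum_coverWeight_mul_coverMatrix [Fintype V] [CommRing R] (he : ∀ i, #(e i) = r + 1) :
    ∑ i, ∑ β, (coverWeight r e i β : R) * coverMatrix R e M i β = #M := by
  have hrow (i : ι) : ∑ β, (coverWeight r e i β : R) * coverMatrix R e M i β =
      if i ∈ M then 1 else 0 := by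
    rw [sum_coverWeight_mul]
    by_cases hi : i ∈ M <;> simp [coverMatrix, hi, he]
  simp [hrow]

variable [CommRing R] [LinearOrder R] [IsStrictOrderedRing R]

theorem IsExactCover.isFeasible_coverMatrix [LT ι] (hM : IsExactCover e M) :
    IsFeasible (coverMatrix R e M) where
  binary := by
    rintro i (j | a) <;> exact (ite_eq_or_eq _ _ _).symm
  sum_le_one := by
    rintro (j | a)
    · exact sum_boole_le_one fun i i' hi hi' => hi.2.symm.trans hi'.2
    · exact sum_boole_le_one fun i i' hi hi' => (hM a).unique hi hi'
  inl_le_leader i j _ := by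
    by_cases hi : i ∈ M <;> by_cases hj : j = i <;> simp [coverMatrix, hi, hj]
  inr_le_leader i a := by
    by_cases hi : i ∈ M <;> by_cases ha : a ∈ e i <;> simp [coverMatrix, hi, ha]

theorem IsFeasible.sum_coverWeight_mul_le_card_fullRows [LT ι] [Fintype V] {x : ι → ι ⊕ V → R}
    (hx : IsFeasible x) (he : ∀ i, #(e i) = r + 1) :
    ∑ i, ∑ β, (coverWeight r e i β : R) * x i β ≤ #(fullRows e x) := by
  simp only [fullRows, ← sum_boole, sum_coverWeight_mul]
  exact sum_le_sum fun i _ => sum_sub_mul_le_ite_forall_eq_one (he i)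
    (fun a _ => hx.binary i (Sum.inr a)) fun a _ => hx.inr_le_leader i a

theorem feasible_weight_iff_threeDM_general [LT ι] [Fintype V] (he : ∀ i, #(e i) = r + 1)
    (hV : Fintype.card V = (r + 1) * k) :
    (∃ x : ι → ι ⊕ V → R, IsFeasible x ∧
      (k : R) ≤ ∑ i, ∑ β, (coverWeight r e i β : R) * x i β) ↔
    ∃ M : Finset ι, IsExactCover e M := by
  constructor
  · rintro ⟨x, hx, hweight⟩
    have hk : k ≤ #(fullRows e x) :=
      Nat.cast_le.1 (hweight.trans (hx.sum_coverWeight_mul_le_card_fullRows he))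
    exact ⟨_, isExactCover_of_pairwiseDisjoint_of_le_card hx.pairwiseDisjoint_fullRows
      (fun i _ => he i) hV hk⟩
  · rintro ⟨M, hM⟩
    refine ⟨coverMatrix R e M, hM.isFeasible_coverMatrix, ?_⟩
    rw [sum_coverWeight_mul_coverMatrix he, hM.card_eq (fun i _ => he i) r.succ_ne_zero hV]

end Reduction

section Triples

variable {α : Type*} [DecidableEq α]

/-- The elements of the triple `t` that lie in `U`, as a set of elements of the subtype `U`; for
a triple of elements of `U`, this is the paper's `elem(t)`. -/
def tripleElems (U : Finset α) (t : α × α × α) : Finset {a // a ∈ U} :=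
  ({t.1, t.2.1, t.2.2} : Finset α).subtype (· ∈ U)

theorem mem_tripleElems {U : Finset α} {t : α × α × α} {a : {a // a ∈ U}} :
    a ∈ tripleElems U t ↔ a.1 = t.1 ∨ a.1 = t.2.1 ∨ a.1 = t.2.2 := by
  simp [tripleElems]

theorem wgt_eq_coverWeight (m : ℕ) (X Y Z : Finset α) (T : Fin m → α × α × α) :
    wgt m X Y Z T = coverWeight 2 fun i => tripleElems (X ∪ Y ∪ Z) (T i) := by
  ext i (j | a) <;> simp [wgt, coverWeight, mem_tripleElems]

variable {X Y Z : Finset α}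

theorem card_tripleElems_union (hXY : Disjoint X Y) (hXZ : Disjoint X Z) (hYZ : Disjoint Y Z)
    {t : α × α × α} (ht : t.1 ∈ X ∧ t.2.1 ∈ Y ∧ t.2.2 ∈ Z) :
    #(tripleElems (X ∪ Y ∪ Z) t) = 3 := by
  obtain ⟨htX, htY, htZ⟩ := ht
  have hsub : ∀ a ∈ ({t.1, t.2.1, t.2.2} : Finset α), a ∈ X ∪ Y ∪ Z := by
    simp [htX, htY, htZ]
  rw [tripleElems, card_subtype, filter_true_of_mem hsub]
  exact card_eq_three.2 ⟨_, _, _, hXY.forall_ne_finset htX htY, hXZ.forall_ne_finset htX htZ,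
    hYZ.forall_ne_finset htY htZ, rfl⟩

theorem card_union_union_of_disjoint (hXY : Disjoint X Y) (hXZ : Disjoint X Z)
    (hYZ : Disjoint Y Z) :
    #(X ∪ Y ∪ Z) = #X + #Y + #Z := by
  rw [card_union_of_disjoint (disjoint_union_left.2 ⟨hXZ, hYZ⟩), card_union_of_disjoint hXY]

end Triples

/-- The Claim inside Theorem 3.2: there is a feasible binary matrix (satisfying the
column-sum constraints of `P_{m,ℓ}` and the SST cuts) of weight at least `k`
iff the 3D-matching instance admits a 3-dimensional matching. -/
theorem feasible_weight_iff_threeDM {α : Type*} [DecidableEq α] (k m : ℕ)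
    (X Y Z : Finset α)
    (hXY : Disjoint X Y) (hXZ : Disjoint X Z) (hYZ : Disjoint Y Z)
    (hX : X.card = k) (hY : Y.card = k) (hZ : Z.card = k)
    (T : Fin m → α × α × α) (hTinj : Function.Injective T)
    (hT : ∀ i, (T i).1 ∈ X ∧ (T i).2.1 ∈ Y ∧ (T i).2.2 ∈ Z) :
    (∃ x : Fin m → ColIdx m X Y Z → ℝ,
      (∀ i β, x i β = 0 ∨ x i β = 1) ∧
      (∀ β, ∑ i, x i β ≤ 1) ∧
      (∀ i j : Fin m, i < j → x i (Sum.inl j) ≤ x i (Sum.inl i)) ∧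
      (∀ (i : Fin m) (a : {a : α // a ∈ X ∪ Y ∪ Z}), x i (Sum.inr a) ≤ x i (Sum.inl i)) ∧
      (k : ℝ) ≤ ∑ i, ∑ β, (wgt m X Y Z T i β : ℝ) * x i β)
    ↔ ∃ M : Finset (Fin m), ∀ a ∈ X ∪ Y ∪ Z,
        ∃! i : Fin m, i ∈ M ∧ (a = (T i).1 ∨ a = (T i).2.1 ∨ a = (T i).2.2) := by
  have hV : Fintype.card {a // a ∈ X ∪ Y ∪ Z} = (2 + 1) * k := by
    rw [Fintype.card_coe, card_union_union_of_disjoint hXY hXZ hYZ, hX, hY, hZ]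
    ring
  simpa only [wgt_eq_coverWeight, isFeasible_iff, and_assoc, IsExactCover, mem_tripleElems,
    Subtype.forall] using feasible_weight_iff_threeDM_general (R := ℝ)
      (fun i => card_tripleElems_union hXY hXZ hYZ (hT i)) hV
end

section
/- Let G = (V,E) be a connected bipartite finite simple graph with bipartition V = R ∪ B, let Γ be a group of automorphisms of G, let L = (ℓ_1,…,ℓ_k) be a sequence of distinct leaders with stabilizer-chain orbits O_i, and let S = S(L) be the corresponding SST cuts. Then P(G,S) equals the set {x ∈ ℝ^V : 0 ≤ x_v ≤ 1 for all v; x_u + x_v ≤ 1 for all {u,v} ∈ E; x_f ≤ x_{ℓ_i} for all (ℓ_i,f) ∈ S} if and only if every orbit O_i, i ∈ {1,…,k}, is entirely contained in R or entirely contained in B. -/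
open Finset

/-- The SST cuts `S(L)`: pairs `(ℓ i, f)` with `f ∈ O_i \ {ℓ i}`, for `i < k`. -/
def sstCuts {α : Type*} (Γ : Set (Equiv.Perm α)) (ℓ : ℕ → α) (k : ℕ) : Set (α × α) :=
  {p | ∃ i < k, p.1 = ℓ i ∧ p.2 ∈ sstOrbit Γ ℓ i ∧ p.2 ≠ ℓ i}

/-- `I` is a stable set of `G`. -/
def IsStableSet {V : Type*} (G : SimpleGraph V) (I : Finset V) : Prop :=
  ∀ u ∈ I, ∀ v ∈ I, ¬ G.Adj u v

/-- The indicator vector of a finite node set. -/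
def indic {V : Type*} [DecidableEq V] (I : Finset V) : V → ℝ :=
  fun v => if v ∈ I then 1 else 0

/-- `P(G,S)`: the convex hull of the indicator vectors of stable sets satisfying
all the SST cuts in `S`. -/
def sstPolytope {V : Type*} [DecidableEq V] (G : SimpleGraph V) (S : Set (V × V)) :
    Set (V → ℝ) :=
  convexHull ℝ
    {x | ∃ I : Finset V, IsStableSet G I ∧ x = indic I ∧ ∀ p ∈ S, x p.2 ≤ x p.1}

/-!
Fix a 2-colouring `c` of `G` and replace `x v` by `1 - x v` on one colour class. Edge inequalities,
and those cuts whose two nodes have the same colour, become order relations `y u ≤ y v`, which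
survive every monotone rounding of the values of `y`. Since a vector with entries in `[0, 1]` is the
average of its threshold vectors, the linear relaxation is integral if no cut is bichromatic.

Conversely, a walk of odd length `2m + 1` from a leader to one of its followers yields the path cut
`∑ x w ≤ m`, the sum being over the nodes of the walk after the leader. It is valid for `P(G, S)`
but violated by the constant vector `1/2`, which lies in the relaxation.
-/

open MeasureTheory

section Threshold

variable {V : Type*}

/-- The 0/1 vector marking the entries of `y` that are at least `t`, used to write `y` as an average
of 0/1 vectors. -/
noncomputable def thresholdVector (y : V → ℝ) (t : ℝ) : V → ℝ :=
  fun v => (Set.Ici t).indicator 1 (y v)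

lemma monotone_indicator_Ici_one {α : Type*} [Preorder α] (t : α) :
    Monotone ((Set.Ici t).indicator (1 : α → ℝ)) := by
  intro r s hrs
  by_cases hr : t ≤ r
  · simp [hr, hr.trans hrs]
  · simpa [hr] using Set.indicator_nonneg (f := (1 : α → ℝ)) (fun _ _ => zero_le_one) s

lemma indicator_one_mem_pair {α : Type*} (A : Set α) (s : α) :
    A.indicator (1 : α → ℝ) s ∈ ({0, 1} : Set ℝ) := by
  by_cases hs : s ∈ A <;> simp [hs]

lemma thresholdVector_apply_eq_indicator_Iic (y : V → ℝ) (v : V) :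
    (fun t => thresholdVector y t v) = (Set.Iic (y v)).indicator 1 := by
  ext t
  simp only [thresholdVector, Set.indicator_apply, Set.mem_Ici, Set.mem_Iic, Pi.one_apply]

lemma setIntegral_Ioc_thresholdVector_apply {y : V → ℝ} (v : V) (hy : y v ∈ Set.Icc 0 1) :
    ∫ t in Set.Ioc 0 1, thresholdVector y t v = y v := by
  have hset : Set.Iic (y v) ∩ Set.Ioc 0 1 = Set.Ioc 0 (y v) := by
    rw [Set.inter_comm, Set.Ioc_inter_Iic, min_eq_right hy.2]
  rw [thresholdVector_apply_eq_indicator_Iic, integral_indicator_one measurableSet_Iic,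
    measureReal_restrict_apply measurableSet_Iic, hset, Real.volume_real_Ioc_of_le hy.1, sub_zero]

lemma finite_range_thresholdVector [Finite V] (y : V → ℝ) :
    (Set.range (thresholdVector y)).Finite := by
  refine (Set.Finite.pi' fun _ : V => Set.toFinite ({0, 1} : Set ℝ)).subset ?_
  rintro _ ⟨t, rfl⟩ v
  exact indicator_one_mem_pair _ _

theorem mem_convexHull_range_thresholdVector [Finite V] {y : V → ℝ}
    (hy : ∀ v, y v ∈ Set.Icc 0 1) : y ∈ convexHull ℝ (Set.range (thresholdVector y)) := by
  have := Fintype.ofFinite V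
  let μ : Measure ℝ := volume.restrict (Set.Ioc 0 1)
  have : IsProbabilityMeasure μ := ⟨by simp [μ]⟩
  have hint : ∀ v, Integrable (fun t => thresholdVector y t v) μ := fun v => by
    rw [thresholdVector_apply_eq_indicator_Iic]
    exact (integrable_const 1).indicator measurableSet_Iic
  have haverage : ∫ t, thresholdVector y t ∂μ = y := by
    ext v
    rw [eval_integral hint, setIntegral_Ioc_thresholdVector_apply v (hy v)]
  suffices ∫ t, thresholdVector y t ∂μ ∈ convexHull ℝ (Set.range (thresholdVector y)) by
    rwa [haverage] at this
  exact (convex_convexHull ℝ _).integral_mem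
    ((finite_range_thresholdVector y).isClosed_convexHull ℝ)
    (.of_forall fun t => subset_convexHull ℝ _ ⟨t, rfl⟩) (.of_eval hint)

end Threshold

section Relaxation

variable {V : Type*} {G : SimpleGraph V} {S : Set (V × V)} {x : V → ℝ}

/-- The linear relaxation of `P(G, S)`, given by the box, edge and SST inequalities. -/
def sstRelaxation (G : SimpleGraph V) (S : Set (V × V)) : Set (V → ℝ) :=
  {x | (∀ v, 0 ≤ x v ∧ x v ≤ 1) ∧ (∀ u v, G.Adj u v → x u + x v ≤ 1) ∧
    ∀ p ∈ S, x p.2 ≤ x p.1}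

lemma convex_sstRelaxation (G : SimpleGraph V) (S : Set (V × V)) :
    Convex ℝ (sstRelaxation G S) := by
  rintro x ⟨hxbox, hxedge, hxcut⟩ y ⟨hybox, hyedge, hycut⟩ a b ha hb hab
  simp only [sstRelaxation, Set.mem_ofPred_eq, Pi.add_apply, Pi.smul_apply, smul_eq_mul]
  refine ⟨fun v => ?_, fun u v huv => ?_, fun p hp => ?_⟩
  · exact convex_Icc (0 : ℝ) 1 (hxbox v) (hybox v) ha hb hab
  · linarith [mul_le_mul_of_nonneg_left (hxedge u v huv) ha,
      mul_le_mul_of_nonneg_left (hyedge u v huv) hb]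
  · exact add_le_add (mul_le_mul_of_nonneg_left (hxcut p hp) ha)
      (mul_le_mul_of_nonneg_left (hycut p hp) hb)

lemma const_half_mem_sstRelaxation (G : SimpleGraph V) (S : Set (V × V)) :
    (fun _ => 1 / 2) ∈ sstRelaxation G S :=
  ⟨fun _ => by norm_num, fun _ _ _ => by norm_num, fun _ _ => le_rfl⟩

lemma indic_mem_sstRelaxation [DecidableEq V] {I : Finset V} (hI : IsStableSet G I)
    (hcut : ∀ p ∈ S, indic I p.2 ≤ indic I p.1) : indic I ∈ sstRelaxation G S := by
  refine ⟨fun v => ?_, fun u v huv => ?_, hcut⟩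
  · unfold indic
    split_ifs <;> norm_num
  · have hnot : ¬ (u ∈ I ∧ v ∈ I) := fun h => hI u h.1 v h.2 huv
    unfold indic
    split_ifs <;> first | tauto | norm_num

lemma sstPolytope_subset_sstRelaxation [DecidableEq V] (G : SimpleGraph V) (S : Set (V × V)) :
    sstPolytope G S ⊆ sstRelaxation G S := by
  refine convexHull_min ?_ (convex_sstRelaxation G S)
  rintro _ ⟨I, hI, rfl, hcut⟩
  exact indic_mem_sstRelaxation hI hcut

lemma mem_sstPolytope_of_forall_mem_pair [Finite V] [DecidableEq V] (hx : x ∈ sstRelaxation G S)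
    (h01 : ∀ v, x v ∈ ({0, 1} : Set ℝ)) : x ∈ sstPolytope G S := by
  have := Fintype.ofFinite V
  obtain ⟨-, hedge, hcut⟩ := hx
  refine subset_convexHull ℝ _ ⟨univ.filter (x · = 1), fun u hu v hv huv => ?_, ?_, hcut⟩
  · have hu : x u = 1 := by simpa using hu
    have hv : x v = 1 := by simpa using hv
    linarith [hedge u v huv]
  · ext v
    rcases h01 v with h | h <;> simp_all [indic]

end Relaxation

section ColorFlip

variable {V : Type*} {G : SimpleGraph V} {S : Set (V × V)} {x : V → ℝ}

/-- Complementing the coordinates of colour `false`: an affine involution that turns the edge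
inequalities of a 2-coloured graph into order relations between coordinates. -/
noncomputable def colorFlip (c : V → Bool) : (V → ℝ) →ᵃ[ℝ] (V → ℝ) :=
  AffineMap.pi fun v => bif c v then (LinearMap.proj v).toAffineMap
    else AffineMap.const ℝ (V → ℝ) 1 - (LinearMap.proj v).toAffineMap

lemma colorFlip_apply (c : V → Bool) (x : V → ℝ) (v : V) :
    colorFlip c x v = bif c v then x v else 1 - x v := by
  cases h : c v <;> simp [colorFlip, h]

lemma colorFlip_colorFlip (c : V → Bool) (x : V → ℝ) : colorFlip c (colorFlip c x) = x := by
  ext v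
  cases h : c v <;> simp [colorFlip_apply, h]

lemma colorFlip_apply_mem_Icc (c : V → Bool) {v : V} (hx : x v ∈ Set.Icc 0 1) :
    colorFlip c x v ∈ Set.Icc 0 1 := by
  cases h : c v <;> simpa [colorFlip_apply, h, and_comm] using hx

lemma colorFlip_apply_mem_pair (c : V → Bool) {v : V} (hx : x v ∈ ({0, 1} : Set ℝ)) :
    colorFlip c x v ∈ ({0, 1} : Set ℝ) := by
  rcases hx with hx | hx <;> cases h : c v <;> simp_all [colorFlip_apply]

lemma colorFlip_comp_mem_sstRelaxation (c : G.Coloring Bool) (hS : ∀ p ∈ S, c p.1 = c p.2)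
    (hx : x ∈ sstRelaxation G S) {φ : ℝ → ℝ} (hφ : Monotone φ) (hφ01 : ∀ s, φ s ∈ Set.Icc 0 1) :
    colorFlip c (φ ∘ colorFlip c x) ∈ sstRelaxation G S := by
  obtain ⟨-, hedge, hcut⟩ := hx
  refine ⟨fun v => colorFlip_apply_mem_Icc c (hφ01 _), fun u v huv => ?_, fun p hp => ?_⟩
  · have huv_edge := hedge u v huv
    have hne : c u ≠ c v := c.valid huv
    cases hu : c u <;> cases hv : c v <;>
      simp only [hu, hv, ne_eq, not_true_eq_false] at hne <;>
      simp only [colorFlip_apply, Function.comp_apply, hu, hv, cond_true, cond_false]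
    · linarith [hφ (show x v ≤ 1 - x u by linarith)]
    · linarith [hφ (show x u ≤ 1 - x v by linarith)]
  · have hp_cut := hcut p hp
    have hp_color := hS p hp
    cases hp₂ : c p.2 <;>
      simp only [colorFlip_apply, Function.comp_apply, hp_color, hp₂, cond_true, cond_false]
    · linarith [hφ (show 1 - x p.1 ≤ 1 - x p.2 by linarith)]
    · exact hφ hp_cut

theorem sstRelaxation_subset_sstPolytope [Finite V] [DecidableEq V] (c : G.Coloring Bool)
    (hS : ∀ p ∈ S, c p.1 = c p.2) : sstRelaxation G S ⊆ sstPolytope G S := by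
  intro x hx
  let y := colorFlip c x
  have hy : y ∈ convexHull ℝ (Set.range (thresholdVector y)) :=
    mem_convexHull_range_thresholdVector fun v => colorFlip_apply_mem_Icc c (hx.1 v)
  have hrounded : colorFlip c '' Set.range (thresholdVector y) ⊆ sstPolytope G S := by
    rintro _ ⟨_, ⟨t, rfl⟩, rfl⟩
    refine mem_sstPolytope_of_forall_mem_pair ?_ fun v =>
      colorFlip_apply_mem_pair c (indicator_one_mem_pair _ _)
    refine colorFlip_comp_mem_sstRelaxation c hS hx (monotone_indicator_Ici_one t) fun s => ?_
    rcases indicator_one_mem_pair (Set.Ici t) s with h | h <;> rw [h] <;> norm_num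
  have hflip : colorFlip c y ∈ convexHull ℝ (colorFlip c '' Set.range (thresholdVector y)) := by
    rw [← AffineMap.image_convexHull]
    exact Set.mem_image_of_mem _ hy
  rw [← colorFlip_colorFlip c x]
  exact convexHull_min hrounded (convex_convexHull ℝ _) hflip

end ColorFlip

section PathCut

variable {V : Type*} {G : SimpleGraph V} {S : Set (V × V)} {x : V → ℝ} {u v : V}

lemma abs_colorFlip_sub_of_ne {c : V → Bool} (hne : c u ≠ c v) (x : V → ℝ) :
    |colorFlip c x u - colorFlip c x v| = |1 - x u - x v| := by
  cases hu : c u <;> cases hv : c v <;>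
    simp only [hu, hv, ne_eq, not_true_eq_false] at hne <;>
    simp only [colorFlip_apply, hu, hv, cond_true, cond_false]
  rw [abs_sub_comm, sub_sub, sub_sub, add_comm (x u), sub_add_eq_sub_sub]

/-- The total slack of the edge inequalities along the walk is the total variation of
`colorFlip c x`, which is at least the difference of its values at the two ends. -/
lemma two_mul_sum_support_tail_add_abs_colorFlip_sub_le (c : G.Coloring Bool)
    (hedge : ∀ u v, G.Adj u v → x u + x v ≤ 1) (p : G.Walk u v) :
    2 * (p.support.tail.map x).sum + |colorFlip c x u - colorFlip c x v| ≤
      p.length - x u + x v := by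
  induction p with
  | nil => simp
  | @cons u w v huw q ih =>
    have hslack : |colorFlip c x u - colorFlip c x w| = 1 - x u - x w := by
      rw [abs_colorFlip_sub_of_ne (c.valid huw), abs_of_nonneg (by linarith [hedge u w huw])]
    have htriangle := abs_sub_le (colorFlip c x u) (colorFlip c x w) (colorFlip c x v)
    rw [SimpleGraph.Walk.support_cons, List.tail_cons, ← q.cons_tail_support, List.map_cons,
      List.sum_cons, SimpleGraph.Walk.length_cons, Nat.cast_succ]
    linarith

lemma sum_support_tail_indic_le [DecidableEq V] (c : G.Coloring Bool) (hne : c u ≠ c v)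
    (p : G.Walk u v) {I : Finset V} (hI : IsStableSet G I) (hcut : indic I v ≤ indic I u) :
    (p.support.tail.map (indic I)).sum ≤ (p.length - 1) / 2 := by
  have hI_mem : indic I ∈ sstRelaxation G {(u, v)} := indic_mem_sstRelaxation hI (by simpa)
  have hslack := two_mul_sum_support_tail_add_abs_colorFlip_sub_le c hI_mem.2.1 p
  rw [abs_colorFlip_sub_of_ne hne] at hslack
  have hend : 1 - indic I u + indic I v ≤ |1 - indic I u - indic I v| := by
    by_cases hu : u ∈ I <;> by_cases hv : v ∈ I <;> simp_all [indic]
  linarith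

lemma isLinearMap_sum_map (l : List V) : IsLinearMap ℝ fun x : V → ℝ => (l.map x).sum :=
  ⟨fun _ _ => List.sum_map_add, fun a x => l.sum_map_mul_left x a⟩

theorem sum_support_tail_le_of_mem_sstPolytope [DecidableEq V] (c : G.Coloring Bool)
    (hne : c u ≠ c v) (huv : (u, v) ∈ S) (p : G.Walk u v) (hx : x ∈ sstPolytope G S) :
    (p.support.tail.map x).sum ≤ (p.length - 1) / 2 := by
  refine convexHull_min ?_ (convex_halfSpace_le (isLinearMap_sum_map p.support.tail) _) hx
  rintro _ ⟨I, hI, rfl, hcut⟩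
  exact sum_support_tail_indic_le c hne p hI (hcut _ huv)

lemma const_half_notMem_sstPolytope [DecidableEq V] (c : G.Coloring Bool) (hne : c u ≠ c v)
    (huv : (u, v) ∈ S) (hreach : G.Reachable u v) : (fun _ => 1 / 2) ∉ sstPolytope G S := by
  intro hmem
  obtain ⟨p⟩ := hreach
  have hcut := sum_support_tail_le_of_mem_sstPolytope c hne huv p hmem
  rw [List.map_const', List.sum_replicate, List.length_tail, p.length_support,
    Nat.add_sub_cancel, nsmul_eq_mul] at hcut
  linarith

theorem sstPolytope_eq_sstRelaxation_iff [Finite V] [DecidableEq V] (c : G.Coloring Bool)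
    (hreach : ∀ p ∈ S, G.Reachable p.1 p.2) :
    sstPolytope G S = sstRelaxation G S ↔ ∀ p ∈ S, c p.1 = c p.2 := by
  constructor
  · intro heq p hp
    by_contra hne
    exact const_half_notMem_sstPolytope c hne hp (hreach p hp)
      (heq ▸ const_half_mem_sstRelaxation G S)
  · exact fun hS => (sstPolytope_subset_sstRelaxation G S).antisymm
      (sstRelaxation_subset_sstPolytope c hS)

end PathCut

section StabilizerChain

variable {α : Type*} {Γ : Set (Equiv.Perm α)}

lemma one_mem_sstChain (hΓ : 1 ∈ Γ) (ℓ : ℕ → α) (i : ℕ) : 1 ∈ sstChain Γ ℓ i := by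
  induction i with
  | zero => exact hΓ
  | succ i ih => exact ⟨ih, rfl⟩

lemma leader_mem_sstOrbit (hΓ : 1 ∈ Γ) (ℓ : ℕ → α) (i : ℕ) : ℓ i ∈ sstOrbit Γ ℓ i :=
  ⟨1, one_mem_sstChain hΓ ℓ i, rfl⟩

lemma forall_mem_sstCuts {ℓ : ℕ → α} {k : ℕ} {P : α → α → Prop} :
    (∀ p ∈ sstCuts Γ ℓ k, P p.1 p.2) ↔
      ∀ i < k, ∀ f ∈ sstOrbit Γ ℓ i, f ≠ ℓ i → P (ℓ i) f := by
  constructor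
  · exact fun h i hi f hf hne => h (ℓ i, f) ⟨i, hi, rfl, hf, hne⟩
  · rintro h ⟨_, f⟩ ⟨i, hi, rfl, hf, hne⟩
    exact h i hi f hf hne

lemma sstRelaxation_sstCuts (G : SimpleGraph α) (Γ : Set (Equiv.Perm α)) (ℓ : ℕ → α) (k : ℕ) :
    sstRelaxation G (sstCuts Γ ℓ k) =
      {x | (∀ v, 0 ≤ x v ∧ x v ≤ 1) ∧ (∀ u v, G.Adj u v → x u + x v ≤ 1) ∧
        ∀ i < k, ∀ f ∈ sstOrbit Γ ℓ i, f ≠ ℓ i → x f ≤ x (ℓ i)} := by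
  ext x
  exact and_congr_right' (and_congr_right' (forall_mem_sstCuts (P := fun l f => x f ≤ x l)))

lemma forall_mem_iff_mem_iff_subset_or_subset_compl {A R : Set α} {a : α} (ha : a ∈ A) :
    (∀ f ∈ A, f ≠ a → (a ∈ R ↔ f ∈ R)) ↔ A ⊆ R ∨ A ⊆ Rᶜ := by
  constructor
  · intro h
    have hall : ∀ f ∈ A, (a ∈ R ↔ f ∈ R) := fun f hf => by
      rcases eq_or_ne f a with rfl | hne
      exacts [Iff.rfl, h f hf hne]
    by_cases haR : a ∈ R
    · exact .inl fun f hf => (hall f hf).1 haR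
    · exact .inr fun f hf hfR => haR ((hall f hf).2 hfR)
  · rintro (h | h) f hf -
    exacts [iff_of_true (h ha) (h hf), iff_of_false (h ha) (h hf)]

end StabilizerChain

theorem sstPolytope_bipartite_no_path_cuts_iff_general
    {V : Type*} [Finite V] [DecidableEq V] (G : SimpleGraph V) (R B : Set V)
    (hcover : ∀ v, v ∈ R ∨ v ∈ B) (hdisjRB : Disjoint R B)
    (hbip : ∀ u v, G.Adj u v → (u ∈ R ∧ v ∈ B) ∨ (u ∈ B ∧ v ∈ R))
    (Γ : Set (Equiv.Perm V)) (hΓ : 1 ∈ Γ) (k : ℕ) (ℓ : ℕ → V)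
    (hreach : ∀ i < k, ∀ f ∈ sstOrbit Γ ℓ i, G.Reachable (ℓ i) f) :
    sstPolytope G (sstCuts Γ ℓ k)
      = {x : V → ℝ |
          (∀ v, 0 ≤ x v ∧ x v ≤ 1) ∧
          (∀ u v, G.Adj u v → x u + x v ≤ 1) ∧
          (∀ i < k, ∀ f ∈ sstOrbit Γ ℓ i, f ≠ ℓ i → x f ≤ x (ℓ i))}
    ↔ ∀ i < k, sstOrbit Γ ℓ i ⊆ R ∨ sstOrbit Γ ℓ i ⊆ B := by
  classical
  obtain rfl : Rᶜ = B := (IsCompl.of_le hdisjRB.le_bot fun v _ => hcover v).compl_eq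
  let c : G.Coloring Bool := .mk (fun v => decide (v ∈ R)) fun {u v} huv heq => by
    have hsides := hbip u v huv
    simp_all
  have hcuts_reach : ∀ p ∈ sstCuts Γ ℓ k, G.Reachable p.1 p.2 :=
    forall_mem_sstCuts.2 fun i hi f hf _ => hreach i hi f hf
  calc _ ↔ sstPolytope G (sstCuts Γ ℓ k) = sstRelaxation G (sstCuts Γ ℓ k) := by
        rw [sstRelaxation_sstCuts]
    _ ↔ ∀ i < k, ∀ f ∈ sstOrbit Γ ℓ i, f ≠ ℓ i → c (ℓ i) = c f :=
        (sstPolytope_eq_sstRelaxation_iff c hcuts_reach).trans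
          (forall_mem_sstCuts (P := fun l f => c l = c f))
    _ ↔ ∀ i < k, sstOrbit Γ ℓ i ⊆ R ∨ sstOrbit Γ ℓ i ⊆ Rᶜ :=
        forall₂_congr fun i _ => by
          simp only [← forall_mem_iff_mem_iff_subset_or_subset_compl (leader_mem_sstOrbit hΓ ℓ i),
            c, SimpleGraph.Coloring.mk, RelHom.coeFn_mk, decide_eq_decide]

/-- For a connected bipartite graph, `P(G,S)` equals the polytope described by box,
edge, and SST inequalities iff every orbit lies entirely in one color class. -/
theorem sstPolytope_bipartite_no_path_cuts_iff
    {V : Type*} [Fintype V] [DecidableEq V] (G : SimpleGraph V)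
    (hconn : G.Connected) (R B : Set V)
    (hcover : ∀ v, v ∈ R ∨ v ∈ B) (hdisjRB : Disjoint R B)
    (hbip : ∀ u v, G.Adj u v → (u ∈ R ∧ v ∈ B) ∨ (u ∈ B ∧ v ∈ R))
    (Γ : Subgroup (Equiv.Perm V))
    (hΓ : ∀ γ ∈ Γ, ∀ u v, G.Adj (γ u) (γ v) ↔ G.Adj u v)
    (k : ℕ) (ℓ : ℕ → V) (hdist : ∀ i < k, ∀ j < k, ℓ i = ℓ j → i = j) :
    (sstPolytope G (sstCuts (↑Γ : Set (Equiv.Perm V)) ℓ k)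
      = {x : V → ℝ |
          (∀ v, 0 ≤ x v ∧ x v ≤ 1) ∧
          (∀ u v, G.Adj u v → x u + x v ≤ 1) ∧
          (∀ i < k, ∀ f ∈ sstOrbit (↑Γ : Set (Equiv.Perm V)) ℓ i, f ≠ ℓ i →
            x f ≤ x (ℓ i))})
    ↔ ∀ i < k, sstOrbit (↑Γ : Set (Equiv.Perm V)) ℓ i ⊆ R
        ∨ sstOrbit (↑Γ : Set (Equiv.Perm V)) ℓ i ⊆ B := by
  exact sstPolytope_bipartite_no_path_cuts_iff_general G R B hcover hdisjRB hbip Γ Γ.one_mem k ℓ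
    fun _ _ _ _ => hconn.preconnected _ _
end

section
/- Let G = (V,E) be a trivially perfect finite simple graph with |V| = n, let Γ be a group of automorphisms of G, and let L = (ℓ_1,…,ℓ_n) be a sequence of distinct leaders exhausting V, with stabilizer-chain orbits O_1,…,O_n, such that the SST cuts S(L) are stringent. Assume that no orbit contains an edge of E, i.e., no two nodes of any O_i are adjacent in G. Then the matrix whose rows are the incidence rows of all maximal cliques of G together with one row −e_{ℓ_i} + e_f for every i and every f ∈ O_i \ {ℓ_i} (where e_v is the v-th standard unit vector) is totally unimodular. -/
open Finset

/-- A finite simple graph is trivially perfect: it has an interval representation by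
pairwise distinct nonempty closed intervals that forms a laminar family. -/
def TriviallyPerfect {V : Type*} (G : SimpleGraph V) : Prop :=
  ∃ I : V → Set ℝ,
    (∀ v, ∃ a b : ℝ, a ≤ b ∧ I v = Set.Icc a b) ∧
    (∀ v w, v ≠ w → I v ≠ I w) ∧
    (∀ v w, v ≠ w → (G.Adj v w ↔ (I v ∩ I w).Nonempty)) ∧
    (∀ v w, (I v ∩ I w).Nonempty → I v ⊆ I w ∨ I w ⊆ I v)

/-- The leader sequence is stringent: each leader `ℓ i` is chosen from
`𝔒'_i = (O_0 ∪ … ∪ O_{i-1}) \ {ℓ_0, …, ℓ_{i-1}}` whenever this set is nonempty. -/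
def sstStringent {α : Type*} (Γ : Set (Equiv.Perm α)) (ℓ : ℕ → α) (k : ℕ) : Prop :=
  ∀ i < k,
    ((⋃ j < i, sstOrbit Γ ℓ j) \ {v | ∃ j < i, ℓ j = v}).Nonempty →
    ℓ i ∈ (⋃ j < i, sstOrbit Γ ℓ j) \ {v | ∃ j < i, ℓ j = v}

/-- Row indices: maximal cliques of `G`. -/
def MaxCliqueIdx {V : Type*} (G : SimpleGraph V) :=
  {C : Finset V // G.IsClique (↑C : Set V) ∧
    ∀ C' : Finset V, G.IsClique (↑C' : Set V) → C ⊆ C' → C = C'}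

/-- Row indices: simple SST cuts, i.e. pairs `(i, f)` with `i < k` and
`f ∈ O_i \ {ℓ i}`. -/
def SSTCutIdx {α : Type*} (Γ : Set (Equiv.Perm α)) (ℓ : ℕ → α) (k : ℕ) :=
  {p : ℕ × α // p.1 < k ∧ p.2 ∈ sstOrbit Γ ℓ p.1 ∧ p.2 ≠ ℓ p.1}

/-- The clique matrix of `G` extended by the rows `-e_{ℓ i} + e_f` of the simple SST cuts. -/
def cliqueSSTMatrix {V : Type*} [DecidableEq V] (G : SimpleGraph V)
    (Γ : Set (Equiv.Perm V)) (ℓ : ℕ → V) (k : ℕ) :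
    Matrix (MaxCliqueIdx G ⊕ SSTCutIdx Γ ℓ k) V ℤ :=
  fun row v =>
    match row with
    | Sum.inl C => if v ∈ C.1 then 1 else 0
    | Sum.inr p => if v = ℓ p.1.1 then -1 else if v = p.1.2 then 1 else 0

/-!
By Ghouila-Houri's criterion it suffices to sign every set `J` of columns so that all signed row
sums lie in `{-1, 0, 1}`. Inclusion of the intervals makes `V` a forest in which adjacency is
comparability and the maximal cliques are the branches. On every branch, the signs given by the
parity of the number of nodes of `J` above a node alternate, so their sum is `0` or `1`.

A cut row forces a leader and each node of its orbit to get the same sign, which the parity with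
respect to all of `J` need not do. So let `N` consist of the nodes lying in a nontrivial orbit,
and sign `J ∩ N` by its own alternation and `J \ N` by the opposite of its own alternation. On every
branch the sum is then a difference of two numbers in `{0, 1}`. The sign is constant on orbits
because nodes of one orbit have the same nodes of `N` above them. Indeed, by stringency, orbits come
in stages, each exhausted before the next one begins. A node of an earlier stage is fixed by the
group forming the orbit, so it lies above all nodes of the orbit or above none. Two nodes of one
stage are not comparable. A node below one node of a nontrivial orbit of a later stage would be
adjacent to all of them, which forces an edge inside that orbit.
-/

section GhouilaHouri

open Matrix

variable {m n ι : Type*}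

/-- The hypothesis of Ghouila-Houri's criterion: every finite set of columns can be signed so that
each row of the signed columns sums to `-1`, `0` or `1`. -/
def HasEquitableSignings (A : Matrix m n ℤ) : Prop :=
  ∀ J : Finset n, ∃ ε : n → ℤˣ, ∀ i, |∑ j ∈ J, A i j * ε j| ≤ 1

theorem HasEquitableSignings.submatrix {m' n' : Type*} {A : Matrix m n ℤ}
    (hA : HasEquitableSignings A) (f : m' → m) {g : n' → n} (hg : Function.Injective g) :
    HasEquitableSignings (A.submatrix f g) := fun J => by
  obtain ⟨ε, hε⟩ := hA (J.map ⟨g, hg⟩)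
  exact ⟨ε ∘ g, fun i => by simpa using hε (f i)⟩

theorem mulVec_adjugate_col {R : Type*} [CommRing R] [Fintype ι] [DecidableEq ι]
    (B : Matrix ι ι R) (i₀ : ι) :
    B *ᵥ (fun j => B.adjugate j i₀) = Pi.single i₀ B.det := by
  ext i
  simpa [Matrix.mul_apply, mulVec, dotProduct, Matrix.one_apply, Pi.single_apply]
    using congrFun₂ B.mul_adjugate i i₀

/-- Off `i₀`, the entries of `B *ᵥ e` have the parity of `B *ᵥ (B.adjugate · i₀) = 0`. -/
theorem mulVec_eq_single_of_even_sub_adjugate [Fintype ι] [DecidableEq ι] {B : Matrix ι ι ℤ}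
    {i₀ : ι} {e : ι → ℤ} (heven : ∀ j, Even (e j - B.adjugate j i₀))
    (he : ∀ i, |(B *ᵥ e) i| ≤ 1) : B *ᵥ e = Pi.single i₀ ((B *ᵥ e) i₀) := by
  ext i
  rcases eq_or_ne i i₀ with rfl | hi
  · simp
  have hdiff : Even ((B *ᵥ e) i - (B *ᵥ fun j => B.adjugate j i₀) i) := by
    rw [← Pi.sub_apply, ← mulVec_sub]
    exact Finset.even_sum _ fun j _ => (heven j).mul_left _
  rw [mulVec_adjugate_col, Pi.single_eq_of_ne hi, sub_zero] at hdiff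
  rw [Pi.single_eq_of_ne hi]
  obtain ⟨r, hr⟩ := hdiff
  have := abs_le.1 (he i)
  omega

theorem abs_det_le_one_of_even_sub_adjugate [Fintype ι] [DecidableEq ι] {B : Matrix ι ι ℤ}
    {i₀ : ι} {e : ι → ℤ} (hadj : ∀ j, |B.adjugate j i₀| ≤ 1)
    (heven : ∀ j, Even (e j - B.adjugate j i₀)) (he : ∀ i, |(B *ᵥ e) i| ≤ 1) :
    |B.det| ≤ 1 := by
  by_cases hzero : ∀ j, B.adjugate j i₀ = 0
  · have hdet : B.det = 0 := by
      simpa [hzero, mulVec, dotProduct] using (congrFun (mulVec_adjugate_col B i₀) i₀).symm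
    simp [hdet]
  push Not at hzero
  obtain ⟨j, hj⟩ := hzero
  have hcramer : B.det * e j = B.adjugate j i₀ * (B *ᵥ e) i₀ := by
    have hsolve : B.adjugate *ᵥ (B *ᵥ e) = B.det • e := by
      rw [mulVec_mulVec, adjugate_mul, smul_mulVec, one_mulVec]
    rw [mulVec_eq_single_of_even_sub_adjugate heven he] at hsolve
    simpa [mul_comm] using (congrFun hsolve j).symm
  have hej : 1 ≤ |e j| := by
    refine Int.one_le_abs fun hej => ?_
    obtain ⟨r, hr⟩ := heven j
    have := abs_le.1 (hadj j)
    omega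
  calc |B.det| ≤ |B.det| * |e j| := le_mul_of_one_le_right (abs_nonneg _) hej
    _ = |B.adjugate j i₀| * |(B *ᵥ e) i₀| := by rw [← abs_mul, hcramer, abs_mul]
    _ ≤ 1 := mul_le_one₀ (hadj j) (abs_nonneg _) (he i₀)

theorem HasEquitableSignings.abs_det_le_one {k : ℕ} {B : Matrix (Fin k) (Fin k) ℤ}
    (hB : HasEquitableSignings B) : |B.det| ≤ 1 := by
  induction k with
  | zero => simp
  | succ k ih =>
    have hadj (j : Fin (k + 1)) : |B.adjugate j 0| ≤ 1 := by
      rw [adjugate_fin_succ_eq_det_submatrix, abs_mul, abs_neg_one_pow, one_mul]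
      exact ih (hB.submatrix _ Fin.succAbove_right_injective)
    obtain ⟨ε, hε⟩ := hB {j | B.adjugate j 0 ≠ 0}
    refine abs_det_le_one_of_even_sub_adjugate (i₀ := 0)
      (e := fun j => if B.adjugate j 0 ≠ 0 then (ε j : ℤ) else 0) hadj (fun j => ?_) fun i => ?_
    · have := abs_le.1 (hadj j)
      have := Int.isUnit_iff.1 (ε j).isUnit
      grind
    · simpa only [mulVec, dotProduct, mul_ite, mul_zero, ← Finset.sum_filter] using hε i

theorem HasEquitableSignings.isTotallyUnimodular {A : Matrix m n ℤ}
    (hA : HasEquitableSignings A) : A.IsTotallyUnimodular := by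
  intro k f g _ hg
  have habs := abs_le.1 (hA.submatrix f hg).abs_det_le_one
  have hdet : (A.submatrix f g).det = 0 ∨ (A.submatrix f g).det = -1 ∨
      (A.submatrix f g).det = 1 := by omega
  simpa [SignType.range_eq] using hdet

end GhouilaHouri

section DepthSign

variable {V : Type*}

/-- The number of elements of `J` strictly above `v`. -/
def depthIn [Preorder V] [DecidableLT V] (J : Finset V) (v : V) : ℕ :=
  #{u ∈ J | v < u}

/-- The parity of `depthIn J v` as a sign. If `J` is a forest with the roots on top, it alternates
along the branches, starting with `1` at the roots. -/
def depthSign [Preorder V] [DecidableLT V] (J : Finset V) (v : V) : ℤˣ :=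
  (-1) ^ depthIn J v

/-- Alternating signs on `J ∩ N`, and opposite alternating signs on `J \ N`. -/
def splitDepthSign [Preorder V] [DecidableLT V] (N : Set V) [DecidablePred (· ∈ N)]
    (J : Finset V) (v : V) : ℤˣ :=
  if v ∈ N then depthSign {u ∈ J | u ∈ N} v else -depthSign {u ∈ J | u ∉ N} v

theorem depthIn_lt_depthIn [Preorder V] [DecidableLT V] {J : Finset V} {u v : V} (hv : v ∈ J)
    (huv : u < v) : depthIn J v < depthIn J u := by
  refine Finset.card_lt_card <| (Finset.ssubset_iff_of_subset ?_).2 ⟨v, by simp [hv, huv], by simp⟩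
  exact Finset.monotone_filter_right _ fun _ _ => huv.trans

theorem depthIn_lt_card [Preorder V] [DecidableLT V] {J : Finset V} {v : V} (hv : v ∈ J) :
    depthIn J v < #J :=
  Finset.card_lt_card <| Finset.filter_ssubset.2 ⟨v, hv, lt_irrefl v⟩

theorem depthIn_inter_of_isUpperSet [Preorder V] [DecidableLT V] [DecidableEq V]
    {J C : Finset V} (hC : IsUpperSet (C : Set V)) {v : V} (hv : v ∈ C) :
    depthIn (J ∩ C) v = depthIn J v := by
  refine congrArg Finset.card (Finset.ext fun u => ?_)
  simp only [Finset.mem_filter, Finset.mem_inter]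
  exact ⟨fun h => ⟨h.1.1, h.2⟩, fun h => ⟨⟨h.1, hC h.2.le hv⟩, h.2⟩⟩

variable [PartialOrder V] [DecidableLT V]

theorem injOn_depthIn_of_isChain {D : Finset V} (hD : IsChain (· ≤ ·) (D : Set V)) :
    Set.InjOn (depthIn D) D := by
  intro u hu v hv huv
  by_contra hne
  rcases hD hu hv hne with h | h
  · exact (depthIn_lt_depthIn hv (h.lt_of_ne hne)).ne' huv
  · exact (depthIn_lt_depthIn hu (h.lt_of_ne' hne)).ne huv

theorem image_depthIn_of_isChain {D : Finset V} (hD : IsChain (· ≤ ·) (D : Set V)) :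
    D.image (depthIn D) = Finset.range #D := by
  refine Finset.eq_of_subset_of_card_le (Finset.image_subset_iff.2 fun v hv =>
    Finset.mem_range.2 (depthIn_lt_card hv)) ?_
  rw [Finset.card_image_of_injOn (injOn_depthIn_of_isChain hD), Finset.card_range]

theorem sum_depthSign_of_isChain {D : Finset V} (hD : IsChain (· ≤ ·) (D : Set V)) :
    ∑ v ∈ D, (depthSign D v : ℤ) = if Even #D then 0 else 1 := by
  rw [← neg_one_geom_sum, ← image_depthIn_of_isChain hD,
    Finset.sum_image (injOn_depthIn_of_isChain hD)]
  simp [depthSign]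

theorem sum_inter_depthSign_eq_zero_or_one [DecidableEq V] (J : Finset V) {C : Finset V}
    (hupper : IsUpperSet (C : Set V)) (hchain : IsChain (· ≤ ·) (C : Set V)) :
    ∑ v ∈ J ∩ C, (depthSign J v : ℤ) = 0 ∨ ∑ v ∈ J ∩ C, (depthSign J v : ℤ) = 1 := by
  have hsum : ∑ v ∈ J ∩ C, (depthSign J v : ℤ) = if Even #(J ∩ C) then 0 else 1 := by
    rw [← sum_depthSign_of_isChain (hchain.mono (mod_cast Finset.inter_subset_right))]
    refine Finset.sum_congr rfl fun v hv => ?_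
    rw [depthSign, depthSign, depthIn_inter_of_isUpperSet hupper (Finset.mem_inter.1 hv).2]
  split_ifs at hsum <;> simp [hsum]

theorem abs_sum_inter_splitDepthSign_le_one [DecidableEq V] (N : Set V) [DecidablePred (· ∈ N)]
    (J : Finset V) {C : Finset V} (hupper : IsUpperSet (C : Set V))
    (hchain : IsChain (· ≤ ·) (C : Set V)) :
    |∑ v ∈ J ∩ C, (splitDepthSign N J v : ℤ)| ≤ 1 := by
  have hsplit : ∑ v ∈ J ∩ C, (splitDepthSign N J v : ℤ) =
      ∑ v ∈ {u ∈ J | u ∈ N} ∩ C, (depthSign {u ∈ J | u ∈ N} v : ℤ) -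
        ∑ v ∈ {u ∈ J | u ∉ N} ∩ C, (depthSign {u ∈ J | u ∉ N} v : ℤ) := by
    simp only [splitDepthSign, apply_ite Units.val, Finset.sum_ite, Units.val_neg,
      Finset.sum_neg_distrib, Finset.filter_inter, sub_eq_add_neg]
  have hin := sum_inter_depthSign_eq_zero_or_one {u ∈ J | u ∈ N} hupper hchain
  have hout := sum_inter_depthSign_eq_zero_or_one {u ∈ J | u ∉ N} hupper hchain
  rw [hsplit, abs_le]
  omega

end DepthSign

section ForestComparability

variable {V : Type*}

/-- `G` is the comparability graph of a forest order on `V`, with the roots on top: the nodes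
above any given node form a chain. It replaces inclusion of intervals. -/
structure IsForestComparabilityGraph [PartialOrder V] (G : SimpleGraph V) : Prop where
  adj_iff : ∀ {u v}, G.Adj u v ↔ u < v ∨ v < u
  isChain_Ici : ∀ v : V, IsChain (· ≤ ·) (Set.Ici v)

theorem TriviallyPerfect.exists_isForestComparabilityGraph {G : SimpleGraph V}
    (hG : TriviallyPerfect G) : ∃ _ : PartialOrder V, IsForestComparabilityGraph G := by
  obtain ⟨I, hIcc, hinj, hadj, hlaminar⟩ := hG
  have hnonempty (v : V) : (I v).Nonempty := by
    obtain ⟨a, b, hab, hv⟩ := hIcc v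
    exact hv ▸ Set.nonempty_Icc.2 hab
  let _ : PartialOrder V := PartialOrder.lift I fun u v => not_imp_not.1 (hinj u v)
  refine ⟨inferInstance, ⟨fun {u v} => ⟨fun huv => ?_, ?_⟩, fun v u hu w hw _ => ?_⟩⟩
  · exact (hlaminar u v ((hadj u v huv.ne).1 huv)).imp
      (fun h : u ≤ v => h.lt_of_ne huv.ne) (fun h : v ≤ u => h.lt_of_ne' huv.ne)
  · rintro (huv | hvu)
    · exact (hadj u v huv.ne).2 ((hnonempty u).mono (Set.subset_inter subset_rfl huv.le))
    · exact (hadj u v hvu.ne').2 ((hnonempty v).mono (Set.subset_inter hvu.le subset_rfl))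
  · exact hlaminar u w ((hnonempty v).mono (Set.subset_inter hu hw))

namespace IsForestComparabilityGraph

variable [PartialOrder V] {G : SimpleGraph V} {u v x y : V}

theorem adj_of_lt_of_adj (hG : IsForestComparabilityGraph G) (hux : u < x) (huy : G.Adj u y)
    (hxy : x ≠ y) : G.Adj x y := by
  rcases hG.adj_iff.1 huy with h | h
  · exact hG.adj_iff.2 <| (hG.isChain_Ici u hux.le h.le hxy).imp
      (fun h' => h'.lt_of_ne hxy) fun h' => h'.lt_of_ne' hxy
  · exact hG.adj_iff.2 (.inr (h.trans hux))

theorem lt_of_lt_of_adj_of_not_adj (hG : IsForestComparabilityGraph G) (hux : u < x)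
    (hvx : G.Adj v x) (huv : ¬G.Adj u v) : v < x :=
  (hG.adj_iff.1 hvx).resolve_right fun hxv => huv (hG.adj_iff.2 (.inl (hux.trans hxv)))

theorem isChain_of_isClique (hG : IsForestComparabilityGraph G) {C : Set V}
    (hC : G.IsClique C) : IsChain (· ≤ ·) C :=
  fun _ hu _ hv huv => (hG.adj_iff.1 (hC hu hv huv)).imp le_of_lt le_of_lt

theorem isUpperSet_maxClique (hG : IsForestComparabilityGraph G) (C : MaxCliqueIdx G) :
    IsUpperSet (C.1 : Set V) := by
  classical
  intro v u hvu hv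
  rcases hvu.eq_or_lt with rfl | hvu
  · exact hv
  have hinsert : G.IsClique (insert u C.1 : Finset V) := by
    rw [Finset.coe_insert, SimpleGraph.isClique_insert]
    refine ⟨C.2.1, fun c hc huc => ?_⟩
    rcases eq_or_ne v c with rfl | hvc
    · exact hG.adj_iff.2 (.inr hvu)
    · exact hG.adj_of_lt_of_adj hvu (C.2.1 hv hc hvc) huc
  rw [C.2.2 _ hinsert (Finset.subset_insert _ _)]
  exact Finset.mem_insert_self _ _

end IsForestComparabilityGraph

end ForestComparability

section StabilizerChain

variable {V : Type*} {ℓ : ℕ → V} {i k a : ℕ}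

theorem mem_sstChain {Γ : Set (Equiv.Perm V)} {γ : Equiv.Perm V} :
    γ ∈ sstChain Γ ℓ i ↔ γ ∈ Γ ∧ ∀ j < i, γ (ℓ j) = ℓ j := by
  induction i with
  | zero => simp [sstChain]
  | succ i ih => simp only [sstChain, Set.mem_ofPred_eq, ih, Nat.forall_lt_succ_right, and_assoc]

theorem leader_mem_sstOrbit_s7 (Γ : Subgroup (Equiv.Perm V)) (ℓ : ℕ → V) (i : ℕ) :
    ℓ i ∈ sstOrbit Γ ℓ i :=
  ⟨1, mem_sstChain.2 ⟨Γ.one_mem, fun _ _ => rfl⟩, rfl⟩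

theorem sstOrbit_subset_of_leader_mem {Γ : Subgroup (Equiv.Perm V)} (hai : a ≤ i)
    (hmem : ℓ i ∈ sstOrbit Γ ℓ a) : sstOrbit Γ ℓ i ⊆ sstOrbit Γ ℓ a := by
  rintro _ ⟨γ, hγ, rfl⟩
  obtain ⟨δ, hδ, hδi⟩ := hmem
  rw [mem_sstChain] at hγ hδ
  refine ⟨γ * δ, mem_sstChain.2 ⟨Γ.mul_mem hγ.1 hδ.1, fun j hj => ?_⟩, congrArg γ hδi⟩
  rw [Equiv.Perm.mul_apply, hδ.2 j hj, hγ.2 j (hj.trans_le hai)]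

/-- A stage begins at step `a`: the nodes of all earlier orbits have already been leaders. For
stringent leaders these are the steps at which the next leader may be chosen freely. -/
def IsStageStart (Γ : Set (Equiv.Perm V)) (ℓ : ℕ → V) (a : ℕ) : Prop :=
  ∀ j < a, sstOrbit Γ ℓ j ⊆ ℓ '' Set.Iio a

theorem exists_leader_mem_sstOrbit_of_not_isStageStart {Γ : Set (Equiv.Perm V)}
    (hstr : sstStringent Γ ℓ k) (hi : i < k) (hstart : ¬IsStageStart Γ ℓ i) :
    ∃ j < i, ℓ i ∈ sstOrbit Γ ℓ j := by
  obtain ⟨j, hj, v, hv, hvℓ⟩ : ∃ j < i, ∃ v ∈ sstOrbit Γ ℓ j, v ∉ ℓ '' Set.Iio i := by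
    simpa only [IsStageStart, not_forall, Set.not_subset, exists_prop] using hstart
  have hmem := (hstr i hi ⟨v, Set.mem_iUnion₂.2 ⟨j, hj, hv⟩, hvℓ⟩).1
  simpa only [Set.mem_iUnion₂, exists_prop] using hmem

theorem exists_isStageStart_sstOrbit_subset {Γ : Subgroup (Equiv.Perm V)}
    (hstr : sstStringent Γ ℓ k) (hi : i < k) :
    ∃ a ≤ i, IsStageStart Γ ℓ a ∧ sstOrbit Γ ℓ i ⊆ sstOrbit Γ ℓ a := by
  induction i using Nat.strong_induction_on with
  | _ i ih =>
    by_cases hstart : IsStageStart Γ ℓ i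
    · exact ⟨i, le_rfl, hstart, subset_rfl⟩
    obtain ⟨j, hj, hij⟩ := exists_leader_mem_sstOrbit_of_not_isStageStart hstr hi hstart
    obtain ⟨a, haj, ha, hja⟩ := ih j hj (hj.trans hi)
    have hai : a ≤ i := haj.trans hj.le
    exact ⟨a, hai, ha, sstOrbit_subset_of_leader_mem hai (hja hij)⟩

/-- The nodes lying in a nontrivial orbit, that is, the nodes occurring in a cut. -/
def nontrivialOrbitNodes (Γ : Set (Equiv.Perm V)) (ℓ : ℕ → V) (k : ℕ) : Set V :=
  {x | ∃ i < k, (sstOrbit Γ ℓ i).Nontrivial ∧ x ∈ sstOrbit Γ ℓ i}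

end StabilizerChain

section OrbitsInForest

variable {V : Type*} {G : SimpleGraph V} {ℓ : ℕ → V} {i j k : ℕ} {u v x y : V}

theorem adj_leader_iff_of_mem_sstOrbit {Γ : Set (Equiv.Perm V)}
    (hΓ : ∀ γ ∈ Γ, ∀ u v, G.Adj (γ u) (γ v) ↔ G.Adj u v) (hji : j < i)
    (hx : x ∈ sstOrbit Γ ℓ i) (hy : y ∈ sstOrbit Γ ℓ i) :
    G.Adj x (ℓ j) ↔ G.Adj y (ℓ j) := by
  have hleader {z : V} (hz : z ∈ sstOrbit Γ ℓ i) : G.Adj z (ℓ j) ↔ G.Adj (ℓ i) (ℓ j) := by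
    obtain ⟨γ, hγ, rfl⟩ := hz
    rw [mem_sstChain] at hγ
    rw [← hΓ γ hγ.1 (ℓ i), hγ.2 j hji]
  rw [hleader hx, hleader hy]

variable [PartialOrder V]

theorem not_leader_lt_of_mem_sstOrbit {Γ : Set (Equiv.Perm V)}
    (hG : IsForestComparabilityGraph G)
    (hΓ : ∀ γ ∈ Γ, ∀ u v, G.Adj (γ u) (γ v) ↔ G.Adj u v) (hji : j < i)
    (hindep : G.IsIndepSet (sstOrbit Γ ℓ i)) (hnontrivial : (sstOrbit Γ ℓ i).Nontrivial)
    (hx : x ∈ sstOrbit Γ ℓ i) : ¬ℓ j < x := by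
  intro hlt
  obtain ⟨y, hy, hyx⟩ := hnontrivial.exists_ne x
  have hadj : G.Adj y (ℓ j) :=
    (adj_leader_iff_of_mem_sstOrbit hΓ hji hx hy).1 (hG.adj_iff.2 (.inr hlt))
  exact hindep hx hy hyx.symm (hG.adj_of_lt_of_adj hlt hadj.symm hyx.symm)

theorem lt_leader_of_mem_sstOrbit {Γ : Set (Equiv.Perm V)}
    (hG : IsForestComparabilityGraph G)
    (hΓ : ∀ γ ∈ Γ, ∀ u v, G.Adj (γ u) (γ v) ↔ G.Adj u v) (hji : j < i)
    (hindep : G.IsIndepSet (sstOrbit Γ ℓ i)) (hu : u ∈ sstOrbit Γ ℓ i)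
    (hv : v ∈ sstOrbit Γ ℓ i) (hlt : u < ℓ j) : v < ℓ j := by
  have hadj : G.Adj v (ℓ j) :=
    (adj_leader_iff_of_mem_sstOrbit hΓ hji hu hv).1 (hG.adj_iff.2 (.inl hlt))
  exact hG.lt_of_lt_of_adj_of_not_adj hlt hadj fun huv => hindep hu hv huv.ne huv

theorem lt_of_mem_sstOrbit_of_mem_nontrivialOrbitNodes {Γ : Subgroup (Equiv.Perm V)}
    (hG : IsForestComparabilityGraph G)
    (hΓ : ∀ γ ∈ Γ, ∀ u v, G.Adj (γ u) (γ v) ↔ G.Adj u v) (hstr : sstStringent Γ ℓ k)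
    (hindep : ∀ i < k, G.IsIndepSet (sstOrbit Γ ℓ i)) (hi : i < k)
    (hu : u ∈ sstOrbit Γ ℓ i) (hv : v ∈ sstOrbit Γ ℓ i)
    (hx : x ∈ nontrivialOrbitNodes Γ ℓ k) (hlt : u < x) : v < x := by
  obtain ⟨i', hi', hnontrivial, hx⟩ := hx
  obtain ⟨a, hai, ha, hsub⟩ := exists_isStageStart_sstOrbit_subset hstr hi
  obtain ⟨a', hai', ha', hsub'⟩ := exists_isStageStart_sstOrbit_subset hstr hi'
  rcases lt_trichotomy a a' with haa' | rfl | ha'a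
  · obtain ⟨j, hj, rfl⟩ := ha' a haa' (hsub hu)
    exact absurd hlt <| not_leader_lt_of_mem_sstOrbit hG hΓ hj
      (hindep a' (hai'.trans_lt hi')) (hnontrivial.mono hsub') (hsub' hx)
  · exact absurd (hG.adj_iff.2 (.inl hlt))
      (hindep a (hai.trans_lt hi) (hsub hu) (hsub' hx) hlt.ne)
  · obtain ⟨j, hj, rfl⟩ := ha a' ha'a (hsub' hx)
    exact lt_leader_of_mem_sstOrbit hG hΓ (hj.trans_le hai) (hindep i hi) hu hv hlt

theorem splitDepthSign_eq_of_mem_sstOrbit [DecidableLT V] {Γ : Subgroup (Equiv.Perm V)}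
    [DecidablePred (· ∈ nontrivialOrbitNodes Γ ℓ k)] (hG : IsForestComparabilityGraph G)
    (hΓ : ∀ γ ∈ Γ, ∀ u v, G.Adj (γ u) (γ v) ↔ G.Adj u v) (hstr : sstStringent Γ ℓ k)
    (hindep : ∀ i < k, G.IsIndepSet (sstOrbit Γ ℓ i)) (hi : i < k)
    (hu : u ∈ sstOrbit Γ ℓ i) (hv : v ∈ sstOrbit Γ ℓ i) (J : Finset V) :
    splitDepthSign (nontrivialOrbitNodes Γ ℓ k) J u =
      splitDepthSign (nontrivialOrbitNodes Γ ℓ k) J v := by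
  rcases eq_or_ne u v with rfl | huv
  · rfl
  have hnontrivial : (sstOrbit Γ ℓ i).Nontrivial := ⟨u, hu, v, hv, huv⟩
  rw [splitDepthSign, splitDepthSign, if_pos ⟨i, hi, hnontrivial, hu⟩,
    if_pos ⟨i, hi, hnontrivial, hv⟩, depthSign, depthSign, depthIn, depthIn]
  congr 2
  refine Finset.filter_congr fun x hx => ?_
  have hxN := (Finset.mem_filter.1 hx).2
  exact ⟨lt_of_mem_sstOrbit_of_mem_nontrivialOrbitNodes hG hΓ hstr hindep hi hu hv hxN,
    lt_of_mem_sstOrbit_of_mem_nontrivialOrbitNodes hG hΓ hstr hindep hi hv hu hxN⟩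

end OrbitsInForest

section CliqueSSTMatrix

variable {V : Type*} [DecidableEq V] {G : SimpleGraph V} {Γ : Set (Equiv.Perm V)} {ℓ : ℕ → V}
  {k : ℕ}

theorem sum_cliqueSSTMatrix_inl_mul (C : MaxCliqueIdx G) (J : Finset V) (ε : V → ℤ) :
    ∑ v ∈ J, cliqueSSTMatrix G Γ ℓ k (Sum.inl C) v * ε v = ∑ v ∈ J ∩ C.1, ε v := by
  simp [cliqueSSTMatrix, ite_mul]

theorem sum_cliqueSSTMatrix_inr_mul (p : SSTCutIdx Γ ℓ k) (J : Finset V) (ε : V → ℤ) :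
    ∑ v ∈ J, cliqueSSTMatrix G Γ ℓ k (Sum.inr p) v * ε v =
      (if p.1.2 ∈ J then ε p.1.2 else 0) - if ℓ p.1.1 ∈ J then ε (ℓ p.1.1) else 0 := by
  have hentry (v : V) : cliqueSSTMatrix G Γ ℓ k (Sum.inr p) v * ε v =
      (if v = p.1.2 then ε v else 0) - if v = ℓ p.1.1 then ε v else 0 := by
    have := p.2.2.2
    grind [cliqueSSTMatrix]
  simp only [hentry, Finset.sum_sub_distrib, Finset.sum_ite_eq']

theorem abs_sum_cliqueSSTMatrix_inr_mul_le_one (p : SSTCutIdx Γ ℓ k) (J : Finset V)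
    {ε : V → ℤˣ} (hε : ε p.1.2 = ε (ℓ p.1.1)) :
    |∑ v ∈ J, cliqueSSTMatrix G Γ ℓ k (Sum.inr p) v * ε v| ≤ 1 := by
  rw [sum_cliqueSSTMatrix_inr_mul p J (fun v => (ε v : ℤ)), hε]
  rcases Int.units_eq_one_or (ε (ℓ p.1.1)) with h | h <;> split_ifs <;> simp [h]

end CliqueSSTMatrix

theorem cliqueSSTMatrix_isTotallyUnimodular_general
    {V : Type*} [PartialOrder V] [DecidableEq V] {G : SimpleGraph V}
    (hG : IsForestComparabilityGraph G) {Γ : Subgroup (Equiv.Perm V)}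
    (hΓ : ∀ γ ∈ Γ, ∀ u v, G.Adj (γ u) (γ v) ↔ G.Adj u v) {ℓ : ℕ → V} {k : ℕ}
    (hstr : sstStringent Γ ℓ k) (hindep : ∀ i < k, G.IsIndepSet (sstOrbit Γ ℓ i)) :
    (cliqueSSTMatrix G Γ ℓ k).IsTotallyUnimodular := by
  classical
  refine HasEquitableSignings.isTotallyUnimodular fun J =>
    ⟨splitDepthSign (nontrivialOrbitNodes Γ ℓ k) J, ?_⟩
  rintro (C | p)
  · rw [sum_cliqueSSTMatrix_inl_mul C J fun v => (splitDepthSign _ J v : ℤ)]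
    exact abs_sum_inter_splitDepthSign_le_one _ J (hG.isUpperSet_maxClique C)
      (hG.isChain_of_isClique C.2.1)
  · have ⟨hi, hf, _⟩ := p.2
    exact abs_sum_cliqueSSTMatrix_inr_mul_le_one p J <|
      splitDepthSign_eq_of_mem_sstOrbit hG hΓ hstr hindep hi hf (leader_mem_sstOrbit_s7 Γ ℓ _) J

/-- For a trivially perfect graph with a stringent leader sequence exhausting all nodes
such that no orbit contains an edge, the clique matrix extended by the simple SST cuts
is totally unimodular. -/
theorem cliqueSSTMatrix_isTotallyUnimodular
    {V : Type*} [Fintype V] [DecidableEq V] (G : SimpleGraph V)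
    (hTP : TriviallyPerfect G) (n : ℕ) (hn : Fintype.card V = n)
    (Γ : Subgroup (Equiv.Perm V))
    (hΓ : ∀ γ ∈ Γ, ∀ u v, G.Adj (γ u) (γ v) ↔ G.Adj u v)
    (ℓ : ℕ → V) (hdist : ∀ i < n, ∀ j < n, ℓ i = ℓ j → i = j)
    (hexh : ∀ v : V, ∃ i < n, ℓ i = v)
    (hstr : sstStringent (↑Γ : Set (Equiv.Perm V)) ℓ n)
    (hnoedge : ∀ i < n, ∀ u ∈ sstOrbit (↑Γ : Set (Equiv.Perm V)) ℓ i,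
      ∀ w ∈ sstOrbit (↑Γ : Set (Equiv.Perm V)) ℓ i, ¬ G.Adj u w) :
    (cliqueSSTMatrix G (↑Γ : Set (Equiv.Perm V)) ℓ n).IsTotallyUnimodular := by
  obtain ⟨_, hG⟩ := hTP.exists_isForestComparabilityGraph
  exact cliqueSSTMatrix_isTotallyUnimodular_general hG hΓ hstr
    fun i hi u hu w hw _ => hnoedge i hi u hu w hw
end

section
/- Let G = (V,E) be a finite simple graph, Γ a group of automorphisms of G, L a sequence of distinct leaders with stabilizer-chain orbits O_i, and S = S(L) the SST cuts. For every leader ℓ = ℓ_i with orbit O_ℓ = O_i, and every clique C of G with C ⊆ O_ℓ, the SST clique cut −x_ℓ + Σ_{f∈C} x_f ≤ 0 is valid for P(G,S); that is, every stable set I of G whose indicator vector satisfies all SST cuts in S satisfies |I ∩ C| ≤ (χ_I)_ℓ, and hence every x ∈ P(G,S) satisfies Σ_{f∈C} x_f ≤ x_ℓ. -/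
open Finset

section Indicator

variable {V : Type*} [DecidableEq V] {I C : Finset V} {u v : V}

theorem indic_of_mem (hv : v ∈ I) : indic I v = 1 :=
  if_pos hv

theorem indic_of_notMem (hv : v ∉ I) : indic I v = 0 :=
  if_neg hv

theorem indic_le_indic_iff : indic I u ≤ indic I v ↔ (u ∈ I → v ∈ I) := by
  by_cases hu : u ∈ I <;> by_cases hv : v ∈ I <;> simp [indic, hu, hv]

theorem sum_indic_eq_card_inter : ∑ v ∈ C, indic I v = (#(I ∩ C) : ℝ) := by
  simp [indic, inter_comm]

end Indicator

section CliqueCut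

variable {V : Type*} [DecidableEq V] {G : SimpleGraph V} {S : Set (V × V)}
  {I C : Finset V} {l : V}

theorem IsStableSet.card_inter_le_one (hI : IsStableSet G I) (hC : G.IsClique (C : Set V)) :
    #(I ∩ C) ≤ 1 := by
  refine card_le_one.2 fun u hu v hv => by_contra fun huv => ?_
  obtain ⟨huI, huC⟩ := mem_inter.1 hu
  obtain ⟨hvI, hvC⟩ := mem_inter.1 hv
  exact hI u huI v hvI (hC huC hvC huv)

theorem IsStableSet.card_inter_le_indic (hI : IsStableSet G I) (hC : G.IsClique (C : Set V))
    (hl : ∀ f ∈ C, f ∈ I → l ∈ I) : (#(I ∩ C) : ℝ) ≤ indic I l := by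
  by_cases hlI : l ∈ I
  · rw [indic_of_mem hlI]
    exact_mod_cast hI.card_inter_le_one hC
  · have disjoint_I_C : Disjoint I C :=
      disjoint_left.2 fun f hfI hfC => hlI (hl f hfC hfI)
    rw [indic_of_notMem hlI, disjoint_iff_inter_eq_empty.1 disjoint_I_C, card_empty, Nat.cast_zero]

theorem mem_of_forall_indic_le (hI : ∀ p ∈ S, indic I p.2 ≤ indic I p.1) {f : V}
    (hf : f ≠ l → (l, f) ∈ S) (hfI : f ∈ I) : l ∈ I := by
  obtain rfl | hfl := eq_or_ne f l
  · exact hfI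
  · exact indic_le_indic_iff.1 (hI (l, f) (hf hfl)) hfI

theorem map_le_of_mem_sstPolytope (φ : (V → ℝ) →ₗ[ℝ] ℝ) {c : ℝ}
    (hφ : ∀ I : Finset V, IsStableSet G I → (∀ p ∈ S, indic I p.2 ≤ indic I p.1) →
      φ (indic I) ≤ c)
    {x : V → ℝ} (hx : x ∈ sstPolytope G S) : φ x ≤ c := by
  refine convexHull_min ?_ (convex_halfSpace_le φ.isLinear c) hx
  rintro _ ⟨I, hI, rfl, hIS⟩
  exact hφ I hI hIS

theorem sum_le_of_mem_sstPolytope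
    (hcard : ∀ I : Finset V, IsStableSet G I → (∀ p ∈ S, indic I p.2 ≤ indic I p.1) →
      (#(I ∩ C) : ℝ) ≤ indic I l)
    {x : V → ℝ} (hx : x ∈ sstPolytope G S) : ∑ f ∈ C, x f ≤ x l := by
  let cut : (V → ℝ) →ₗ[ℝ] ℝ :=
    ∑ f ∈ C, LinearMap.proj (R := ℝ) (φ := fun _ => ℝ) f - LinearMap.proj l
  have cut_apply (y : V → ℝ) : cut y = ∑ f ∈ C, y f - y l := by
    simp [cut]
  have cut_nonpos : cut x ≤ 0 := by
    refine map_le_of_mem_sstPolytope cut (fun I hI hIS => ?_) hx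
    rw [cut_apply, sum_indic_eq_card_inter]
    exact sub_nonpos.2 (hcard I hI hIS)
  rwa [cut_apply, sub_nonpos] at cut_nonpos

end CliqueCut

theorem sstCliqueCut_valid_general
    {V : Type*} [DecidableEq V] (G : SimpleGraph V) (S : Set (V × V)) (l : V)
    (C : Finset V) (hC : G.IsClique (C : Set V)) (hS : ∀ f ∈ C, f ≠ l → (l, f) ∈ S) :
    (∀ I : Finset V, IsStableSet G I → (∀ p ∈ S, indic I p.2 ≤ indic I p.1) →
      (#(I ∩ C) : ℝ) ≤ indic I l) ∧
    (∀ x ∈ sstPolytope G S, ∑ f ∈ C, x f ≤ x l) := by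
  have card_le (I : Finset V) (hI : IsStableSet G I)
      (hIS : ∀ p ∈ S, indic I p.2 ≤ indic I p.1) : (#(I ∩ C) : ℝ) ≤ indic I l :=
    hI.card_inter_le_indic hC fun f hf => mem_of_forall_indic_le hIS (hS f hf)
  exact ⟨card_le, fun _ => sum_le_of_mem_sstPolytope card_le⟩

/-- SST clique cuts are valid for `P(G,S)`: for a leader `ℓ i` and a clique `C`
contained in its orbit, every stable set whose indicator satisfies the SST cuts
contains at most `(χ_I)_{ℓ i}` nodes of `C`, and hence every `x ∈ P(G,S)` satisfies
`∑_{f ∈ C} x f ≤ x (ℓ i)`. -/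
theorem sstCliqueCut_valid
    {V : Type*} [Fintype V] [DecidableEq V] (G : SimpleGraph V)
    (Γ : Subgroup (Equiv.Perm V))
    (hΓ : ∀ γ ∈ Γ, ∀ u v, G.Adj (γ u) (γ v) ↔ G.Adj u v)
    (k : ℕ) (ℓ : ℕ → V) (hdist : ∀ i < k, ∀ j < k, ℓ i = ℓ j → i = j)
    (i : ℕ) (hi : i < k) (C : Finset V) (hC : G.IsClique (↑C : Set V))
    (hCO : (↑C : Set V) ⊆ sstOrbit (↑Γ : Set (Equiv.Perm V)) ℓ i) :
    (∀ I : Finset V, IsStableSet G I →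
      (∀ p ∈ sstCuts (↑Γ : Set (Equiv.Perm V)) ℓ k, indic I p.2 ≤ indic I p.1) →
      ((I ∩ C).card : ℝ) ≤ indic I (ℓ i)) ∧
    (∀ x ∈ sstPolytope G (sstCuts (↑Γ : Set (Equiv.Perm V)) ℓ k),
      ∑ f ∈ C, x f ≤ x (ℓ i)) := by
  exact sstCliqueCut_valid_general G _ (ℓ i) C hC fun _ hf hne => ⟨i, hi, rfl, hCO hf, hne⟩
end
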